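/- arXiv:2408.10109 — 2 statements merged into one kernel-verified Lean document; each statement's English description precedes it below -/
import Mathlib

section
/- Let W, ΔW ∈ ℝ^{m×s}, let Y ∈ ℝ^{s×s} be nonsingular, and let ΔM ∈ ℝ^{s×s} satisfy YᵀY = WᵀW + ΔM. Define Q = (W + ΔW)·Y⁻¹. Then ‖I − QᵀQ‖ ≤ (‖ΔM‖ + 2‖W‖·‖ΔW‖ + ‖ΔW‖²)·‖Y⁻¹‖². -/
open scoped Matrix

/-- The spectral norm (`ℓ²→ℓ²` operator norm) of a real matrix. -/
noncomputable def specNorm {m n : Type*} [Fintype m] [Fintype n] [DecidableEq n]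
    (A : Matrix m n ℝ) : ℝ :=
  ‖LinearMap.toContinuousLinearMap (Matrix.toEuclideanLin A)‖

/-- The smallest singular value of a real matrix: the infimum of `‖A x‖₂` over
unit vectors `x`. -/
noncomputable def sigmaMin {m n : Type*} [Fintype m] [Fintype n] [DecidableEq n]
    (A : Matrix m n ℝ) : ℝ :=
  sInf ((fun x : EuclideanSpace ℝ n => ‖Matrix.toEuclideanLin A x‖) ''
    {x : EuclideanSpace ℝ n | ‖x‖ = 1})

/-- The 2-norm condition number `κ(A) = ‖A‖ / σ_min(A)`. -/
noncomputable def condNum {m n : Type*} [Fintype m] [Fintype n] [DecidableEq n]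
    (A : Matrix m n ℝ) : ℝ :=
  specNorm A / sigmaMin A

open scoped Matrix.Norms.L2Operator in
theorem specNorm_eq_l2 {m n : Type*} [Fintype m] [Fintype n] [DecidableEq n]
    (A : Matrix m n ℝ) : specNorm A = ‖A‖ := by
  rw [Matrix.l2_opNorm_def]; rfl

open scoped Matrix.Norms.L2Operator in
theorem l2_transpose {m n : ℕ} (A : Matrix (Fin m) (Fin n) ℝ) : ‖Aᵀ‖ = ‖A‖ := by
  rw [← Matrix.conjTranspose_eq_transpose_of_trivial, Matrix.l2_opNorm_conjTranspose]

open scoped Matrix.Norms.L2Operator in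
theorem stmt_10 (m s : ℕ)
    (W ΔW : Matrix (Fin m) (Fin s) ℝ)
    (Y : Matrix (Fin s) (Fin s) ℝ) (hY : IsUnit Y.det)
    (ΔM : Matrix (Fin s) (Fin s) ℝ)
    (hYY : Yᵀ * Y = Wᵀ * W + ΔM) :
    specNorm (1 - ((W + ΔW) * Y⁻¹)ᵀ * ((W + ΔW) * Y⁻¹)) ≤
      (specNorm ΔM + 2 * specNorm W * specNorm ΔW + specNorm ΔW ^ 2) *
        specNorm Y⁻¹ ^ 2 := by
  simp only [specNorm_eq_l2]
  have h1 : Y * Y⁻¹ = 1 := Matrix.mul_nonsing_inv Y hY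
  have h2 : (Y⁻¹)ᵀ * Yᵀ = 1 := by rw [← Matrix.transpose_mul, h1, Matrix.transpose_one]
  have h3 : (Y⁻¹)ᵀ * (Yᵀ * Y) * Y⁻¹ = 1 := by
    rw [← Matrix.mul_assoc, h2, Matrix.one_mul, h1]
  have key : 1 - ((W + ΔW) * Y⁻¹)ᵀ * ((W + ΔW) * Y⁻¹)
      = (Y⁻¹)ᵀ * (ΔM - Wᵀ * ΔW - ΔWᵀ * W - ΔWᵀ * ΔW) * Y⁻¹ := by
    have h4 : ΔM - Wᵀ * ΔW - ΔWᵀ * W - ΔWᵀ * ΔW = Yᵀ * Y - (W + ΔW)ᵀ * (W + ΔW) := by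
      rw [hYY, Matrix.transpose_add, Matrix.add_mul, Matrix.mul_add, Matrix.mul_add]
      abel
    rw [h4, Matrix.mul_sub, Matrix.sub_mul, h3, Matrix.transpose_mul]
    simp only [Matrix.mul_assoc]
  rw [key]
  have e1 : ‖Wᵀ * ΔW‖ ≤ ‖W‖ * ‖ΔW‖ :=
    (Matrix.l2_opNorm_mul _ _).trans_eq (by rw [l2_transpose])
  have e2 : ‖ΔWᵀ * W‖ ≤ ‖ΔW‖ * ‖W‖ :=
    (Matrix.l2_opNorm_mul _ _).trans_eq (by rw [l2_transpose])
  have e3 : ‖ΔWᵀ * ΔW‖ ≤ ‖ΔW‖ * ‖ΔW‖ :=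
    (Matrix.l2_opNorm_mul _ _).trans_eq (by rw [l2_transpose])
  have e4 : ‖ΔM - Wᵀ * ΔW - ΔWᵀ * W - ΔWᵀ * ΔW‖
      ≤ ‖ΔM‖ + 2 * ‖W‖ * ‖ΔW‖ + ‖ΔW‖ ^ 2 := by
    have a1 := norm_sub_le (ΔM - Wᵀ * ΔW - ΔWᵀ * W) (ΔWᵀ * ΔW)
    have a2 := norm_sub_le (ΔM - Wᵀ * ΔW) (ΔWᵀ * W)
    have a3 := norm_sub_le ΔM (Wᵀ * ΔW)
    nlinarith
  calc _ ≤ ‖(Y⁻¹)ᵀ * (ΔM - Wᵀ * ΔW - ΔWᵀ * W - ΔWᵀ * ΔW)‖ * ‖Y⁻¹‖ :=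
        Matrix.l2_opNorm_mul _ _
    _ ≤ (‖(Y⁻¹)ᵀ‖ * ‖ΔM - Wᵀ * ΔW - ΔWᵀ * W - ΔWᵀ * ΔW‖) * ‖Y⁻¹‖ := by
        gcongr; exact Matrix.l2_opNorm_mul _ _
    _ = ‖ΔM - Wᵀ * ΔW - ΔWᵀ * W - ΔWᵀ * ΔW‖ * ‖Y⁻¹‖ ^ 2 := by
        rw [l2_transpose]; ring
    _ ≤ _ := by gcongr
end

section
/- Let W, ΔW ∈ ℝ^{m×s} with σ_min(W) > 0, let Y ∈ ℝ^{s×s} be nonsingular, and let ΔM ∈ ℝ^{s×s} satisfy YᵀY = WᵀW + ΔM and ‖ΔM‖ < σ_min(W)². Define Q = (W + ΔW)·Y⁻¹. Then ‖I − QᵀQ‖ ≤ (‖ΔM‖ + 2‖W‖·‖ΔW‖ + ‖ΔW‖²) / (σ_min(W)² − ‖ΔM‖). -/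
open scoped Matrix

theorem sigmaMin_mul_le {m s : ℕ} (W : Matrix (Fin m) (Fin s) ℝ) (x : EuclideanSpace ℝ (Fin s)) :
    sigmaMin W * ‖x‖ ≤ ‖Matrix.toEuclideanLin W x‖ := by
  by_cases hx : x = 0
  · simp [hx]
  have hx' : 0 < ‖x‖ := norm_pos_iff.mpr hx
  have h : sigmaMin W ≤ ‖Matrix.toEuclideanLin W (‖x‖⁻¹ • x)‖ := by
    apply csInf_le
    · exact ⟨0, by rintro _ ⟨y, _, rfl⟩; exact norm_nonneg _⟩
    · refine ⟨‖x‖⁻¹ • x, ?_, rfl⟩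
      simp [norm_smul, hx'.ne']
  rw [map_smul, norm_smul, norm_inv, norm_norm] at h
  calc sigmaMin W * ‖x‖ ≤ (‖x‖⁻¹ * ‖Matrix.toEuclideanLin W x‖) * ‖x‖ := by gcongr
    _ = _ := by field_simp

theorem norm_sq_toEuclideanLin {m s : ℕ} (W : Matrix (Fin m) (Fin s) ℝ)
    (x : EuclideanSpace ℝ (Fin s)) :
    ‖Matrix.toEuclideanLin W x‖ ^ 2 = inner ℝ x (Matrix.toEuclideanLin (Wᵀ * W) x) := by
  rw [← real_inner_self_eq_norm_sq]
  simp only [EuclideanSpace.inner_eq_star_dotProduct, Matrix.ofLp_toLpLin, Matrix.toLin'_apply,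
    star_trivial]
  rw [← Matrix.mulVec_mulVec, dotProduct_comm (Wᵀ *ᵥ _), Matrix.dotProduct_mulVec,
    Matrix.mulVec_transpose, dotProduct_comm]

open scoped Matrix.Norms.L2Operator in
theorem stmt_aux (m s : ℕ)
    (W ΔW : Matrix (Fin m) (Fin s) ℝ) (σ : ℝ) (hW : 0 < σ)
    (hσ : ∀ x, σ * ‖x‖ ≤ ‖Matrix.toEuclideanLin W x‖)
    (Y : Matrix (Fin s) (Fin s) ℝ) (hY : IsUnit Y.det)
    (ΔM : Matrix (Fin s) (Fin s) ℝ)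
    (hYY : Yᵀ * Y = Wᵀ * W + ΔM)
    (hΔM : ‖ΔM‖ < σ ^ 2) :
    ‖1 - ((W + ΔW) * Y⁻¹)ᵀ * ((W + ΔW) * Y⁻¹)‖ ≤
      (‖ΔM‖ + 2 * ‖W‖ * ‖ΔW‖ + ‖ΔW‖ ^ 2) / (σ ^ 2 - ‖ΔM‖) := by
  have hd : 0 < σ ^ 2 - ‖ΔM‖ := sub_pos.mpr hΔM
  have key : ∀ x, (σ ^ 2 - ‖ΔM‖) * ‖x‖ ^ 2 ≤ ‖Matrix.toEuclideanLin Y x‖ ^ 2 := by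
    intro x
    rw [norm_sq_toEuclideanLin, hYY, map_add, LinearMap.add_apply, inner_add_right,
      ← norm_sq_toEuclideanLin]
    have h1 : (σ * ‖x‖) ^ 2 ≤ ‖Matrix.toEuclideanLin W x‖ ^ 2 :=
      pow_le_pow_left₀ (by positivity) (hσ x) 2
    have h2 := abs_le.mp (abs_real_inner_le_norm x (Matrix.toEuclideanLin ΔM x))
    have h3 : ‖Matrix.toEuclideanLin ΔM x‖ ≤ ‖ΔM‖ * ‖x‖ := Matrix.l2_opNorm_mulVec ΔM x
    have h4 := mul_le_mul_of_nonneg_left h3 (norm_nonneg x)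
    nlinarith [h2.1]
  have hT : ∀ {a b : ℕ} (A : Matrix (Fin a) (Fin b) ℝ), ‖Aᵀ‖ = ‖A‖ := by
    intro a b A
    rw [← Matrix.conjTranspose_eq_transpose_of_trivial, Matrix.l2_opNorm_conjTranspose]
  have hinv : ‖Y⁻¹‖ ≤ (√(σ ^ 2 - ‖ΔM‖))⁻¹ := by
    rw [Matrix.l2_opNorm_def]
    refine ContinuousLinearMap.opNorm_le_bound _ (by positivity) fun z => ?_
    have h := key (Matrix.toEuclideanLin Y⁻¹ z)
    have h' : Matrix.toEuclideanLin Y (Matrix.toEuclideanLin Y⁻¹ z) = z := by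
      ext i
      simp [Matrix.ofLp_toLpLin, Matrix.mulVec_mulVec, Matrix.mul_nonsing_inv _ hY]
    rw [h'] at h
    change ‖Matrix.toEuclideanLin Y⁻¹ z‖ ≤ _
    rw [inv_mul_eq_div, le_div_iff₀ (by positivity)]
    refine (sq_le_sq₀ (by positivity) (norm_nonneg _)).mp ?_
    rw [mul_pow, Real.sq_sqrt hd.le]
    linarith
  have hinv2 : ‖Y⁻¹‖ * ‖Y⁻¹‖ ≤ (σ ^ 2 - ‖ΔM‖)⁻¹ := by
    calc _ ≤ (√(σ ^ 2 - ‖ΔM‖))⁻¹ * (√(σ ^ 2 - ‖ΔM‖))⁻¹ := by gcongr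
      _ = _ := by rw [← mul_inv, Real.mul_self_sqrt hd.le]
  have hid : 1 - ((W + ΔW) * Y⁻¹)ᵀ * ((W + ΔW) * Y⁻¹) =
      Y⁻¹ᵀ * (ΔM - (Wᵀ * ΔW + ΔWᵀ * W) - ΔWᵀ * ΔW) * Y⁻¹ := by
    have h1 : (1 : Matrix (Fin s) (Fin s) ℝ) = Y⁻¹ᵀ * (Yᵀ * Y) * Y⁻¹ := by
      rw [← Matrix.mul_assoc, ← Matrix.transpose_mul, Matrix.mul_nonsing_inv _ hY,
        Matrix.transpose_one, Matrix.one_mul, Matrix.mul_nonsing_inv _ hY]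
    have h2 : ΔM - (Wᵀ * ΔW + ΔWᵀ * W) - ΔWᵀ * ΔW = Yᵀ * Y - (W + ΔW)ᵀ * (W + ΔW) := by
      rw [hYY, Matrix.transpose_add, Matrix.add_mul, Matrix.mul_add, Matrix.mul_add]
      abel
    rw [h2, Matrix.mul_sub, Matrix.sub_mul, ← h1, Matrix.transpose_mul]
    simp only [Matrix.mul_assoc]
  have hE : ‖ΔM - (Wᵀ * ΔW + ΔWᵀ * W) - ΔWᵀ * ΔW‖ ≤ ‖ΔM‖ + 2 * ‖W‖ * ‖ΔW‖ + ‖ΔW‖ ^ 2 := by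
    have a := norm_sub_le (ΔM - (Wᵀ * ΔW + ΔWᵀ * W)) (ΔWᵀ * ΔW)
    have b := norm_sub_le ΔM (Wᵀ * ΔW + ΔWᵀ * W)
    have c := norm_add_le (Wᵀ * ΔW) (ΔWᵀ * W)
    have d := Matrix.l2_opNorm_mul Wᵀ ΔW
    have e := Matrix.l2_opNorm_mul ΔWᵀ W
    have f := Matrix.l2_opNorm_mul ΔWᵀ ΔW
    rw [hT] at d e f
    nlinarith
  rw [hid, div_eq_mul_inv]
  calc _ ≤ ‖Y⁻¹ᵀ‖ * ‖ΔM - (Wᵀ * ΔW + ΔWᵀ * W) - ΔWᵀ * ΔW‖ * ‖Y⁻¹‖ :=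
        (Matrix.l2_opNorm_mul _ _).trans
          (mul_le_mul_of_nonneg_right (Matrix.l2_opNorm_mul _ _) (norm_nonneg _))
    _ = ‖ΔM - (Wᵀ * ΔW + ΔWᵀ * W) - ΔWᵀ * ΔW‖ * (‖Y⁻¹‖ * ‖Y⁻¹‖) := by rw [hT]; ring
    _ ≤ _ := by gcongr

theorem stmt_12 (m s : ℕ)
    (W ΔW : Matrix (Fin m) (Fin s) ℝ) (hW : 0 < sigmaMin W)
    (Y : Matrix (Fin s) (Fin s) ℝ) (hY : IsUnit Y.det)
    (ΔM : Matrix (Fin s) (Fin s) ℝ)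
    (hYY : Yᵀ * Y = Wᵀ * W + ΔM)
    (hΔM : specNorm ΔM < sigmaMin W ^ 2) :
    specNorm (1 - ((W + ΔW) * Y⁻¹)ᵀ * ((W + ΔW) * Y⁻¹)) ≤
      (specNorm ΔM + 2 * specNorm W * specNorm ΔW + specNorm ΔW ^ 2) /
        (sigmaMin W ^ 2 - specNorm ΔM) := by
  exact stmt_aux m s W ΔW _ hW (sigmaMin_mul_le W) Y hY ΔM hYY hΔM
end
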